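/- Let A : Type u carry a homogeneous structure (e, t, p). Then the formal disk 𝔻_e at e admits a homogeneous structure: there exist a point e' : 𝔻_e with e' = ⟨e, rfl⟩, a family of equivalences t' : 𝔻_e → (𝔻_e ≃ 𝔻_e), and equalities t' x e' = x for all x : 𝔻_e. -/

import Mathlib

/-!
By the universal property of the modality, every map `f : A → B` preserves the relation
`ι x = ι y` of being infinitesimally close. Hence for `x ∈ 𝔻_e` the equivalence `t x` preserves and
reflects membership in the disk: as `ι (t x e) = ι x = ι e`, the point `y` is close to `e` exactly
when `t x y` is close to `t x e`, i.e. to `e`. So `t x` restricts to `𝔻_e`.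
-/

universe u

/-- Maps preserve infinitesimal closeness, because `ι B ∘ f` factors through `ι A`. -/
theorem iota_congr (ℑ : Type u → Type u) (ι : ∀ A : Type u, A → ℑ A)
    (mod : ∀ (A : Type u) (B : ℑ A → Type u),
      Function.Bijective (fun (s : ∀ a : ℑ A, ℑ (B a)) => fun a : A => s (ι A a)))
    {A B : Type u} (f : A → B) {x y : A} (h : ι A x = ι A y) : ι B (f x) = ι B (f y) := by
  obtain ⟨s, hs⟩ := (mod A (fun _ => B)).2 (fun a => ι B (f a))
  have hs' : ∀ a, s (ι A a) = ι B (f a) := congrFun hs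
  rw [← hs', ← hs', h]

/-- If `A` is homogeneous with unit `e`, then the formal disk `𝔻_e` carries a
homogeneous structure with unit `⟨e, rfl⟩`. -/
theorem statement8 (ℑ : Type u → Type u) (ι : ∀ A : Type u, A → ℑ A)
    (mod : ∀ (A : Type u) (B : ℑ A → Type u),
      Function.Bijective (fun (s : ∀ a : ℑ A, ℑ (B a)) => fun a : A => s (ι A a)))
    (A : Type u) (e : A) (t : A → (A ≃ A)) (p : ∀ x : A, t x e = x) :
    ∃ (e' : {y : A // ι A y = ι A e})
      (t' : {y : A // ι A y = ι A e} →
        ({y : A // ι A y = ι A e} ≃ {y : A // ι A y = ι A e})),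
      e' = ⟨e, rfl⟩ ∧ ∀ x : {y : A // ι A y = ι A e}, t' x e' = x := by
  refine ⟨⟨e, rfl⟩, fun x => (t x.1).subtypeEquiv fun y => ?_, rfl, fun x => Subtype.ext (p x.1)⟩
  have hx : ι A (t x.1 e) = ι A e := by rw [p]; exact x.2
  constructor
  · intro hy
    exact (iota_congr ℑ ι mod (t x.1) hy).trans hx
  · intro hy
    simpa using iota_congr ℑ ι mod (t x.1).symm (hy.trans hx.symm)
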